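/- The number of equivalence classes of factorizations of the n-cycle (1 2 … n) into n − 1 transpositions equals the number of rooted plane trees with n − 1 internal vertices all of degree 4 and 2n leaves of degree 1 (where the root is a leaf). -/

import Mathlib

/-- Equivalence of factorizations: generated by swapping two adjacent
commuting factors. -/
inductive FactEquiv {n : ℕ} : List (Equiv.Perm (Fin n)) → List (Equiv.Perm (Fin n)) → Prop
  | refl (l) : FactEquiv l l
  | swap (l₁ l₂ : List (Equiv.Perm (Fin n))) (a b : Equiv.Perm (Fin n)) (h : a * b = b * a) :
      FactEquiv (l₁ ++ a :: b :: l₂) (l₁ ++ b :: a :: l₂)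
  | trans {l₁ l₂ l₃} : FactEquiv l₁ l₂ → FactEquiv l₂ l₃ → FactEquiv l₁ l₃

/-- Factorizations of the `n`-cycle `(1 2 … n)` into `n − 1` transpositions. -/
def TransFact (n : ℕ) : Type :=
  {l : List (Equiv.Perm (Fin n)) //
    l.length = n - 1 ∧ (∀ σ ∈ l, σ.IsSwap) ∧ l.prod = finRotate n}

/-- A plane tree: a node together with an ordered (left-to-right) list of
child subtrees; `node 0 _` is a leaf.  A rooted plane tree whose root is a
leaf is encoded by the subtree hanging below the root, so that a non-root
vertex of degree `d` is a node with `d - 1` children. -/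
inductive PTree : Type
  | node : (k : ℕ) → (Fin k → PTree) → PTree

/-- Number of leaves (vertices with no children) of a plane tree. -/
def PTree.numLeaves : PTree → ℕ
  | .node k f => if k = 0 then 1 else ∑ i : Fin k, PTree.numLeaves (f i)

/-- Number of internal (non-leaf) vertices of a plane tree. -/
def PTree.internalCount : PTree → ℕ
  | .node k f => (if k = 0 then 0 else 1) + ∑ i : Fin k, PTree.internalCount (f i)

/-- Every internal vertex has exactly 3 children, i.e. degree 4 once the edge
towards the root is counted. -/
def PTree.ternary : PTree → Prop
  | .node k f => (k = 0 ∨ k = 3) ∧ ∀ i, PTree.ternary (f i)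

/-! Let `(a k)` be the first factor of a minimal factorization of the cycle `a → a + 1 → ⋯ → b → a`
that moves `a`. Colouring points by the connected components of the graph of factors shows that a
factorization with the fewest possible transpositions never leaves the cycles of its product.
Applied to the factors other than `(a k)`, this yields `z < k` such that each of them lies in one of
`[a, z]`, `[z + 1, k]` and `[k, b]`, in an order that commutations of disjoint transpositions can
sort into `C (a k) R L`, where `L`, `C` and `R` are minimal factorizations of the cycles on these
three intervals. Recursively, each class is represented by a ternary tree. Conversely, the multiset
of factors is an invariant of the class and determines `k`, `z`, the three pieces and so the tree.

The sorting takes place in any monoid where the images of disjoint transpositions commute: in the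
permutation group it preserves the product, and in the monoid of words modulo commutations it shows
that the class is unchanged. -/

section CycleFactorizations

open Equiv

lemma eq_of_sameCycle {α κ : Type*} {π : Perm α} {f : α → κ} (hf : ∀ x, f (π x) = f x) {x y : α}
    (h : π.SameCycle x y) : f x = f y := by
  obtain ⟨i, rfl⟩ := h
  induction i with
  | zero => rfl
  | succ i ih => rw [add_comm, zpow_add, zpow_one, Perm.mul_apply, hf, ih]
  | pred i ih =>
    rw [sub_eq_neg_add, zpow_add, zpow_neg_one, Perm.mul_apply, ih, ← hf (π⁻¹ _),
      Perm.inv_def, apply_symm_apply]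

section SwapProd

variable {α κ : Type*} [DecidableEq α] {l : List (α × α)}

/-- The product, in order, of the transpositions `(i j)` encoded by a list of pairs `(i, j)`. -/
def swapProd (l : List (α × α)) : Perm α := (l.map fun p => swap p.1 p.2).prod

@[simp] lemma swapProd_nil : swapProd ([] : List (α × α)) = 1 := rfl

@[simp] lemma swapProd_cons (p : α × α) (l : List (α × α)) :
    swapProd (p :: l) = swap p.1 p.2 * swapProd l := List.prod_cons

@[simp] lemma swapProd_append (l l' : List (α × α)) :
    swapProd (l ++ l') = swapProd l * swapProd l' := by simp [swapProd]

lemma apply_swapProd_eq_self {f : α → κ} (hf : ∀ p ∈ l, f p.1 = f p.2) (x : α) :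
    f (swapProd l x) = f x := by
  induction l with
  | nil => rfl
  | cons p l ih =>
    rw [List.forall_mem_cons] at hf
    rw [swapProd_cons, Perm.mul_apply, apply_swap_eq_self hf.1, ih hf.2]

lemma swapProd_apply_mem_iff {s : Set α} (hs : ∀ p ∈ l, p.1 ∈ s ↔ p.2 ∈ s) (x : α) :
    swapProd l x ∈ s ↔ x ∈ s :=
  (apply_swapProd_eq_self (f := (· ∈ s)) (fun p hp => propext (hs p hp)) x).to_iff

lemma swapProd_apply_of_forall_ne {x : α} (hx : ∀ p ∈ l, p.1 ≠ x ∧ p.2 ≠ x) :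
    swapProd l x = x :=
  (swapProd_apply_mem_iff (s := {x}) (fun p hp => by simp [hx p hp]) x).2 rfl

lemma swapProd_map_conj (σ : Perm α) (l : List (α × α)) :
    swapProd (l.map (Prod.map σ σ)) = σ * swapProd l * σ⁻¹ := by
  induction l with
  | nil => simp
  | cons p l ih =>
    rw [List.map_cons, swapProd_cons, ih, swapProd_cons, ← mul_assoc, ← mul_assoc, ← mul_assoc,
      mul_swap_eq_swap_mul σ, Prod.map_fst, Prod.map_snd]

-- Each pair of the list merges at most two colour classes.
lemma exists_coloring (S : Finset α) (l : List (α × α)) :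
    ∃ f : α → α, (∀ p ∈ l, f p.1 = f p.2) ∧ S.card ≤ (S.image f).card + l.length := by
  induction l with
  | nil => exact ⟨id, by simp, by simp⟩
  | cons p l ih =>
    obtain ⟨f, hf, hcard⟩ := ih
    let g : α → α := fun z => if f z = f p.2 then f p.1 else f z
    refine ⟨g, List.forall_mem_cons.2 ⟨by simp [g], fun q hq => by simp only [g, hf q hq]⟩, ?_⟩
    have hsub : (S.image f).erase (f p.2) ⊆ S.image g := by
      intro w hw
      obtain ⟨hne, hw⟩ := Finset.mem_erase.1 hw
      obtain ⟨z, hz, rfl⟩ := Finset.mem_image.1 hw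
      exact Finset.mem_image.2 ⟨z, hz, if_neg hne⟩
    have herase := (S.image f).pred_card_le_card_erase (a := f p.2)
    have := Finset.card_le_card hsub
    rw [List.length_cons]
    omega

variable [DecidableEq κ] {S : Finset α} {c : α → κ}

lemma exists_coloring_factorsThrough [Nonempty α]
    (hc : ∀ x ∈ S, ∀ y ∈ S, c x = c y → (swapProd l).SameCycle x y) :
    ∃ g : κ → α, (∀ p ∈ l, p.1 ∈ S → p.2 ∈ S → g (c p.1) = g (c p.2)) ∧
      S.card ≤ ((S.image c).image g).card + l.length := by
  obtain ⟨f, hf, hcard⟩ := exists_coloring S l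
  let g : κ → α := fun v => f (Function.invFunOn c S v)
  have hg : ∀ x ∈ S, g (c x) = f x := fun x hx =>
    eq_of_sameCycle (apply_swapProd_eq_self hf) <|
      hc _ (Function.invFunOn_mem ⟨x, hx, rfl⟩) _ hx (Function.invFunOn_eq ⟨x, hx, rfl⟩)
  refine ⟨g, fun p hp h₁ h₂ => by rw [hg _ h₁, hg _ h₂, hf p hp], ?_⟩
  rwa [Finset.image_image, Finset.image_congr (f := g ∘ c) hg]

lemma card_le_card_image_add_length
    (hc : ∀ x ∈ S, ∀ y ∈ S, c x = c y → (swapProd l).SameCycle x y) :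
    S.card ≤ (S.image c).card + l.length := by
  obtain _ | _ := isEmpty_or_nonempty α
  · simp [Finset.eq_empty_of_isEmpty S]
  · obtain ⟨g, -, hg⟩ := exists_coloring_factorsThrough hc
    exact hg.trans (Nat.add_le_add_right Finset.card_image_le _)

-- A factorization into as few transpositions as its cycles allow never leaves those cycles:
-- a colouring by connected components cannot afford to merge two of them.
lemma eq_of_mem_of_card_image_add_length_le
    (hc : ∀ x ∈ S, ∀ y ∈ S, c x = c y → (swapProd l).SameCycle x y)
    (hcard : (S.image c).card + l.length ≤ S.card) {p : α × α} (hp : p ∈ l) (h₁ : p.1 ∈ S)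
    (h₂ : p.2 ∈ S) : c p.1 = c p.2 := by
  have : Nonempty α := ⟨p.1⟩
  obtain ⟨g, hg, hg_card⟩ := exists_coloring_factorsThrough hc
  have hinj : Set.InjOn g (S.image c) :=
    Finset.card_image_iff.1 (le_antisymm Finset.card_image_le (by omega))
  exact hinj (by simpa using ⟨_, h₁, rfl⟩) (by simpa using ⟨_, h₂, rfl⟩) (hg p hp h₁ h₂)

end SwapProd

section Interval

/-- The pair `p` is increasing and lies in the interval `[u, v]`. -/
abbrev PairIn (u v : ℕ) (p : ℕ × ℕ) : Prop := u ≤ p.1 ∧ p.1 < p.2 ∧ p.2 ≤ v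

/-- The sublist of pairs that lie in the interval `[u, v]`. -/
def restrict (u v : ℕ) (l : List (ℕ × ℕ)) : List (ℕ × ℕ) := l.filter (PairIn u v ·)

/-- The list `l` encodes a minimal factorization into transpositions of the cycle
`a → a + 1 → ⋯ → b → a`. The value at `b` is forced by the others and not recorded. -/
structure IsIntervalFact (a b : ℕ) (l : List (ℕ × ℕ)) : Prop where
  pairIn : ∀ p ∈ l, PairIn a b p
  add_length : a + l.length = b
  apply : ∀ x, a ≤ x → x < b → swapProd l x = x + 1

variable {a b u v k z : ℕ} {l l₁ l₂ : List (ℕ × ℕ)}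

lemma pairIn_of_mem_restrict {p : ℕ × ℕ} (hp : p ∈ restrict u v l) : PairIn u v p := by
  simpa using (List.mem_filter.1 hp).2

lemma restrict_eq_self (h : ∀ p ∈ l, PairIn u v p) : restrict u v l = l :=
  List.filter_eq_self.2 fun p hp => decide_eq_true (h p hp)

lemma restrict_eq_nil (h : ∀ p ∈ l, ¬PairIn u v p) : restrict u v l = [] :=
  List.filter_eq_nil_iff.2 fun p hp => by simpa using h p hp

lemma swapProd_apply_mem_Icc (h : ∀ p ∈ l, PairIn u v p) {x : ℕ} (hx : x ∈ Set.Icc u v) :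
    swapProd l x ∈ Set.Icc u v :=
  (swapProd_apply_mem_iff (fun p hp => by have := h p hp; simp only [Set.mem_Icc]; omega) x).2 hx

lemma swapProd_apply_of_notMem_Icc (h : ∀ p ∈ l, PairIn u v p) {x : ℕ} (hx : x ∉ Set.Icc u v) :
    swapProd l x = x :=
  swapProd_apply_of_forall_ne fun p hp => by
    have := h p hp
    rw [Set.mem_Icc] at hx
    omega

lemma sameCycle_of_apply_eq_succ {π : Perm ℕ} (hπ : ∀ x, u ≤ x → x < v → π x = x + 1) {x : ℕ}
    (hx : x ∈ Set.Icc u v) : π.SameCycle u x := by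
  obtain ⟨hux, hxv⟩ := hx
  induction x, hux using Nat.le_induction with
  | base => exact .rfl
  | succ x hux ih => exact hπ x hux hxv ▸ Perm.sameCycle_apply_right.2 (ih (by omega))

lemma sub_le_length_of_apply_eq_succ (h : ∀ x, u ≤ x → x < v → swapProd l x = x + 1) :
    v - u ≤ l.length := by
  have hcard : (Finset.Icc u v).card ≤ ((Finset.Icc u v).image fun _ => ()).card + l.length :=
    card_le_card_image_add_length fun x hx y hy _ =>
      (sameCycle_of_apply_eq_succ h (Finset.mem_Icc.1 hx)).symm.trans
        (sameCycle_of_apply_eq_succ h (Finset.mem_Icc.1 hy))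
  have := Finset.card_le_univ ((Finset.Icc u v).image fun _ => ())
  rw [Nat.card_Icc] at hcard
  rw [Fintype.card_unit] at this
  omega

-- If `[a, b]` is covered by two cycles of the product of `b - a - 1` transpositions,
-- then each transposition stays on one side of the cut.
lemma mem_iff_mem_of_sameCycle {s : Set ℕ} {x₀ x₁ : ℕ}
    (hlen : a + l.length + 1 = b)
    (h₀ : ∀ x ∈ Set.Icc a b, x ∈ s → (swapProd l).SameCycle x₀ x)
    (h₁ : ∀ x ∈ Set.Icc a b, x ∉ s → (swapProd l).SameCycle x₁ x)
    {p : ℕ × ℕ} (hp : p ∈ l) (hp₁ : p.1 ∈ Set.Icc a b) (hp₂ : p.2 ∈ Set.Icc a b) :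
    p.1 ∈ s ↔ p.2 ∈ s := by
  classical
  have hcard := Finset.card_le_univ ((Finset.Icc a b).image fun x => decide (x ∈ s))
  rw [Fintype.card_bool] at hcard
  refine decide_eq_decide.1 (eq_of_mem_of_card_image_add_length_le (S := Finset.Icc a b)
    (c := fun x => decide (x ∈ s)) (fun x hx y hy hxy => ?_) ?_ hp (Finset.mem_Icc.2 hp₁)
    (Finset.mem_Icc.2 hp₂))
  · rw [decide_eq_decide] at hxy
    rw [Finset.mem_Icc] at hx hy
    by_cases hxs : x ∈ s
    · exact (h₀ x hx hxs).symm.trans (h₀ y hy (hxy.1 hxs))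
    · exact (h₁ x hx hxs).symm.trans (h₁ y hy (hxs ∘ hxy.2))
  · rw [Nat.card_Icc]
    omega

/-- The position of the factors of a factorization of the cycle on `[a, b]` around the first
factor `(a k)` that moves `a`: removing it from the underlying tree cuts `[a, b]` into `[a, z]` and
`[z + 1, b]`, and the latter is cut again at `k`. The factors in `l₁` come before `(a k)`, those in
`l₂` after it. -/
structure IsRootSplit (a z k b : ℕ) (l₁ l₂ : List (ℕ × ℕ)) : Prop where
  le_left : a ≤ z
  left_lt : z < k
  le_right : k ≤ b
  before : ∀ p ∈ l₁, PairIn (a + 1) z p ∨ PairIn (z + 1) k p ∨ PairIn (k + 1) b p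
  after : ∀ p ∈ l₂, PairIn a z p ∨ PairIn (z + 1) (k - 1) p ∨ PairIn k b p

lemma swapProd_append_map_conj_swap (a k : ℕ) (l₁ l₂ : List (ℕ × ℕ)) :
    swapProd (l₁ ++ l₂.map (Prod.map (swap a k) (swap a k))) =
      swapProd (l₁ ++ (a, k) :: l₂) * swap a k := by
  rw [swapProd_append, swapProd_map_conj, swapProd_append, swapProd_cons, swap_inv]
  simp only [mul_assoc]

namespace IsIntervalFact

lemma le (h : IsIntervalFact a b l) : a ≤ b := by
  have := h.add_length
  omega

lemma apply_right (h : IsIntervalFact a b l) : swapProd l b = a := by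
  obtain ⟨x, hx⟩ := (swapProd l).surjective a
  have hxI : x ∈ Set.Icc a b := by
    by_contra hxI
    have := swapProd_apply_of_notMem_Icc h.pairIn hxI
    exact hxI ⟨by omega, by have := h.le; omega⟩
  obtain rfl | hlt := hxI.2.eq_or_lt
  · exact hx
  · have := h.apply x hxI.1 hlt
    have := hxI.1
    omega

lemma exists_eq_append_cons (h : IsIntervalFact a b l) (hab : a < b) :
    ∃ k l₁ l₂, l = l₁ ++ (a, k) :: l₂ ∧ ∀ p ∈ l₁, PairIn (a + 1) b p := by
  obtain ⟨p, hp, hpa⟩ : ∃ p ∈ l, p.1 = a := by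
    by_contra! hne
    have := swapProd_apply_of_forall_ne (x := a) fun p hp =>
      ⟨hne p hp, by have := h.pairIn p hp; omega⟩
    have := h.apply a le_rfl hab
    omega
  obtain ⟨q, l₁, l₂, hl₁, hq, rfl, -⟩ :=
    List.exists_of_eraseP (p := fun p => p.1 = a) hp (by simpa using hpa)
  obtain rfl : q.1 = a := of_decide_eq_true hq
  refine ⟨q.2, l₁, l₂, rfl, fun p hp => ?_⟩
  have := h.pairIn p (by simp [hp])
  have : p.1 ≠ q.1 := by simpa using hl₁ p hp
  omega

variable (h : IsIntervalFact a b (l₁ ++ (a, k) :: l₂)) (hl₁ : ∀ p ∈ l₁, PairIn (a + 1) b p)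
include h

lemma pairIn_of_mem_append {p : ℕ × ℕ} (hp : p ∈ l₁ ++ l₂) : PairIn a b p :=
  h.pairIn p (by rw [List.mem_append] at hp; rw [List.mem_append, List.mem_cons]; tauto)

lemma add_length_append : a + (l₁ ++ l₂).length + 1 = b := by
  have := h.add_length
  simp only [List.length_append, List.length_cons] at this ⊢
  omega

lemma swapProd_append_map_swap_apply {x : ℕ} (hax : a < x) (hxb : x < b) (hxk : x ≠ k) :
    swapProd (l₁ ++ l₂.map (Prod.map (swap a k) (swap a k))) x = x + 1 := by
  rw [swapProd_append_map_conj_swap, Perm.mul_apply,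
    swap_apply_of_ne_of_ne (by omega) hxk, h.apply x hax.le hxb]

lemma swapProd_append_map_swap_apply_left (hak : a ≤ k) (hkb : k < b) :
    swapProd (l₁ ++ l₂.map (Prod.map (swap a k) (swap a k))) a = k + 1 := by
  rw [swapProd_append_map_conj_swap, Perm.mul_apply, swap_apply_left, h.apply k hak hkb]

-- Moving `(a k)` to the right end of the product conjugates `l₂` and leaves a minimal
-- factorization of a permutation with the two cycles `{a + 1, …, k}` and `{a, k + 1, …, b}`.
lemma mem_Ioc_iff_of_mem {p : ℕ × ℕ}
    (hp : p ∈ l₁ ++ l₂.map (Prod.map (swap a k) (swap a k)))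
    (hp₁ : p.1 ∈ Set.Icc a b) (hp₂ : p.2 ∈ Set.Icc a b) :
    p.1 ∈ Set.Ioc a k ↔ p.2 ∈ Set.Ioc a k := by
  have hk : PairIn a b (a, k) := h.pairIn (a, k) (by simp)
  refine mem_iff_mem_of_sameCycle (x₀ := a + 1) (x₁ := a)
    (by simpa using h.add_length_append) (fun x _ hx => ?_) (fun x hx hxs => ?_) hp hp₁ hp₂
  · exact sameCycle_of_apply_eq_succ (v := k)
      (fun y hay hyk => h.swapProd_append_map_swap_apply hay (by omega) hyk.ne) hx
  · obtain rfl | hax := hx.1.eq_or_lt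
    · exact .rfl
    · have hkx : k < x := lt_of_not_ge fun hxk => hxs ⟨hax, hxk⟩
      have hkb := hkx.trans_le hx.2
      rw [← Perm.sameCycle_apply_left, h.swapProd_append_map_swap_apply_left (by omega) hkb]
      exact sameCycle_of_apply_eq_succ (v := b)
        (fun y hky hyb => h.swapProd_append_map_swap_apply (by omega) hyb (by omega)) ⟨hkx, hx.2⟩

lemma lt_root_iff_of_mem_right {p : ℕ × ℕ} (hp : p ∈ l₂) : p.1 < k ↔ p.2 < k := by
  have hk : PairIn a b (a, k) := h.pairIn (a, k) (by simp)
  have hswap : ∀ x ∈ Set.Icc a b,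
      swap a k x ∈ Set.Icc a b ∧ (swap a k x ∈ Set.Ioc a k ↔ x < k) := fun x hx => by
    simp only [Set.mem_Icc, Set.mem_Ioc, swap_apply_def] at hx ⊢
    grind
  obtain ⟨hp₁, hlt, hp₂⟩ := h.pairIn_of_mem_append (List.mem_append_right l₁ hp)
  have h₁ := hswap p.1 ⟨hp₁, by omega⟩
  have h₂ := hswap p.2 ⟨by omega, hp₂⟩
  rw [← h₁.2, ← h₂.2]
  exact h.mem_Ioc_iff_of_mem (p := Prod.map (swap a k) (swap a k) p)
    (List.mem_append_right l₁ (List.mem_map_of_mem hp)) h₁.1 h₂.1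

include hl₁

-- The product of `l₁ ++ l₂` is `(a y) c`, where `c` is the cycle on `[a, b]`.
lemma swapProd_append_apply {x : ℕ} (hax : a ≤ x) (hxb : x < b) (hx : x + 1 ≠ swapProd l₁ k) :
    swapProd (l₁ ++ l₂) x = x + 1 := by
  have hconj := mul_swap_eq_swap_mul (swapProd l₁) a k
  rw [swapProd_apply_of_notMem_Icc hl₁ (x := a) (by simp)] at hconj
  have hprod : swapProd (l₁ ++ l₂) =
      swap a (swapProd l₁ k) * swapProd (l₁ ++ (a, k) :: l₂) := by
    simp only [swapProd_append, swapProd_cons]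
    rw [← mul_assoc (swapProd l₁), hconj, mul_assoc (swap a _), swap_mul_self_mul]
  rw [hprod, Perm.mul_apply, h.apply x hax hxb, swap_apply_of_ne_of_ne (by omega) hx]

lemma swapProd_root_mem_Ioc : swapProd l₁ k ∈ Set.Ioc a b := by
  have hk : PairIn a b (a, k) := h.pairIn (a, k) (by simp)
  have := swapProd_apply_mem_Icc hl₁ (x := k) ⟨by omega, by omega⟩
  exact ⟨this.1, this.2⟩

-- Deleting `(a k)` leaves a minimal factorization of a permutation with the two cycles
-- `{a, …, y - 1}` and `{y, …, b}`, where `y` is the image of `k` under the product of `l₁`.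
lemma lt_swapProd_root_iff_of_mem {p : ℕ × ℕ} (hp : p ∈ l₁ ++ l₂) :
    p.1 < swapProd l₁ k ↔ p.2 < swapProd l₁ k := by
  obtain ⟨hay, hyb⟩ := h.swapProd_root_mem_Ioc hl₁
  obtain ⟨hp₁, hlt, hp₂⟩ := h.pairIn_of_mem_append hp
  refine mem_iff_mem_of_sameCycle (s := Set.Iio (swapProd l₁ k)) (x₀ := a) (x₁ := swapProd l₁ k)
    h.add_length_append (fun x hx hxy => ?_) (fun x hx hxy => ?_) hp
    ⟨hp₁, by omega⟩ ⟨by omega, hp₂⟩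
  · exact sameCycle_of_apply_eq_succ (v := swapProd l₁ k - 1)
      (fun x hax _ => h.swapProd_append_apply hl₁ hax (by omega) (by omega))
      ⟨hx.1, by rw [Set.mem_Iio] at hxy; omega⟩
  · exact sameCycle_of_apply_eq_succ (v := b)
      (fun x hyx hxb => h.swapProd_append_apply hl₁ (by omega) hxb (by omega))
      ⟨by simpa using hxy, hx.2⟩

lemma isRootSplit : IsRootSplit a (swapProd l₁ k - 1) k b l₁ l₂ := by
  have hk : PairIn a b (a, k) := h.pairIn (a, k) (by simp)
  obtain ⟨hay, -⟩ := h.swapProd_root_mem_Ioc hl₁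
  have hyk : swapProd l₁ k ≤ k := by
    have := swapProd_apply_mem_iff (s := Set.Iio (swapProd l₁ k)) (l := l₁)
      (fun p hp => h.lt_swapProd_root_iff_of_mem hl₁ (List.mem_append_left l₂ hp)) k
    simpa using this
  refine ⟨by omega, by omega, hk.2.2, fun p hp => ?_, fun p hp => ?_⟩
  · have hp' := hl₁ p hp
    have hy := h.lt_swapProd_root_iff_of_mem hl₁ (List.mem_append_left l₂ hp)
    have hcut := h.mem_Ioc_iff_of_mem (List.mem_append_left _ hp) ⟨by omega, by omega⟩
      ⟨by omega, by omega⟩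
    simp only [Set.mem_Ioc] at hcut
    omega
  · have hp' := h.pairIn_of_mem_append (List.mem_append_right l₁ hp)
    have hy := h.lt_swapProd_root_iff_of_mem hl₁ (List.mem_append_right l₁ hp)
    have hcut := h.lt_root_iff_of_mem_right hp
    omega

end IsIntervalFact

end Interval

section SortedProduct

variable {β M : Type*} [Monoid M] {f : β → M}

lemma prod_map_eq_filter_mul (P : β → Prop) [DecidablePred P] {l : List β}
    (hl : l.Pairwise fun p q => ¬P p → P q → Commute (f p) (f q)) :
    (l.map f).prod = ((l.filter (P ·)).map f).prod * ((l.filter (¬P ·)).map f).prod := by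
  induction l with
  | nil => simp
  | cons p l ih =>
    obtain ⟨hp, hl⟩ := List.pairwise_cons.1 hl
    by_cases hP : P p
    · simp [hP, ih hl, mul_assoc]
    · have hcomm : Commute (f p) ((l.filter (P ·)).map f).prod :=
        Commute.list_prod_right _ _ fun m hm => by
          obtain ⟨q, hq, rfl⟩ := List.mem_map.1 hm
          rw [List.mem_filter, decide_eq_true_iff] at hq
          exact hp q hq.1 hP hq.2
      simp [hP, ih hl, ← mul_assoc, hcomm.eq]

lemma prod_map_eq_prod_map_range (c : β → ℕ) {l : List β} {N : ℕ}
    (hl : l.Pairwise fun p q => c q < c p → Commute (f p) (f q)) (hc : ∀ p ∈ l, c p < N) :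
    (l.map f).prod =
      ((List.range N).map fun i => ((l.filter (c · = i)).map f).prod).prod := by
  induction N generalizing l with
  | zero =>
    rw [List.eq_nil_iff_forall_not_mem.2 fun p hp => (hc p hp).not_ge (Nat.zero_le _)]
    rfl
  | succ N ih =>
    rw [prod_map_eq_filter_mul (c · < N) (hl.imp fun h hp hq => h (by omega)),
      ih (hl.filter _) (by simp), List.range_succ, List.map_append, List.prod_append,
      List.map_singleton, List.prod_singleton]
    congr 2
    · refine List.map_congr_left fun i hi => ?_
      rw [List.mem_range] at hi
      rw [List.filter_filter]
      congr 3
      grind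
    · refine congrArg _ (List.filter_congr fun p hp => ?_)
      have := hc p hp
      grind

end SortedProduct

section Pieces

variable {a b u v k z : ℕ} {l l₁ l₂ : List (ℕ × ℕ)}

/-- The transpositions encoded by `p` and `q` have disjoint supports. -/
abbrev EndpointsDisjoint (p q : ℕ × ℕ) : Prop := p.1 ≠ q.1 ∧ p.1 ≠ q.2 ∧ p.2 ≠ q.1 ∧ p.2 ≠ q.2

lemma EndpointsDisjoint.commute_swap {p q : ℕ × ℕ} (h : EndpointsDisjoint p q) :
    Commute (swap p.1 p.2) (swap q.1 q.2) := by
  obtain ⟨h₁₁, h₁₂, h₂₁, h₂₂⟩ := h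
  refine Perm.Disjoint.commute fun x => ?_
  by_cases hx : x = p.1 ∨ x = p.2
  · exact .inr (swap_apply_of_ne_of_ne (by grind) (by grind))
  · exact .inl (swap_apply_of_ne_of_ne (by grind) (by grind))

/-- The factorization of the cycle on `[a, b]` obtained from factorizations `L`, `C` and `R` of the
cycles on `[a, z]`, `[z + 1, k]` and `[k, b]`. -/
def rootJoin (a k : ℕ) (L C R : List (ℕ × ℕ)) : List (ℕ × ℕ) := C ++ (a, k) :: (R ++ L)

lemma mem_rootJoin {L C R : List (ℕ × ℕ)} {p : ℕ × ℕ} :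
    p ∈ rootJoin a k L C R ↔ p ∈ C ∨ p = (a, k) ∨ p ∈ R ∨ p ∈ L := by
  simp [rootJoin]

lemma restrict_rootJoin {L C R : List (ℕ × ℕ)} (h : ¬PairIn u v (a, k)) :
    restrict u v (rootJoin a k L C R) = restrict u v C ++ (restrict u v R ++ restrict u v L) := by
  rw [rootJoin, restrict, List.filter_append, List.filter_cons_of_neg (by simpa using h),
    List.filter_append]
  rfl

/-- The intervals `[a, z]`, `[z + 1, k]` and `[k, b]` contain the pairs of `L`, `C` and `R`. -/
structure IsRootJoin (a z k b : ℕ) (L C R : List (ℕ × ℕ)) : Prop where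
  le_left : a ≤ z
  left_lt : z < k
  le_right : k ≤ b
  pairIn_left : ∀ p ∈ L, PairIn a z p
  pairIn_centre : ∀ p ∈ C, PairIn (z + 1) k p
  pairIn_right : ∀ p ∈ R, PairIn k b p

namespace IsRootJoin

variable {L C R : List (ℕ × ℕ)} (j : IsRootJoin a z k b L C R)
include j

lemma swapProd_apply_left {x : ℕ} (hx : x ∈ Set.Icc a z) :
    swapProd (rootJoin a k L C R) x =
      if swapProd L x = a then swapProd C k else swapProd L x := by
  obtain ⟨-, hzk, -, hL, hC, hR⟩ := j
  have hLx := swapProd_apply_mem_Icc hL hx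
  rw [Set.mem_Icc] at hLx
  simp only [rootJoin, swapProd_append, swapProd_cons, Perm.mul_apply]
  rw [swapProd_apply_of_notMem_Icc hR (by simp only [Set.mem_Icc]; omega)]
  split_ifs with h
  · rw [h, swap_apply_left]
  · rw [swap_apply_of_ne_of_ne h (by omega),
      swapProd_apply_of_notMem_Icc hC (by simp only [Set.mem_Icc]; omega)]

lemma swapProd_apply_centre {x : ℕ} (hx : x ∈ Set.Ioo z k) :
    swapProd (rootJoin a k L C R) x = swapProd C x := by
  obtain ⟨haz, -, -, hL, -, hR⟩ := j
  obtain ⟨hzx, hxk⟩ := hx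
  simp only [rootJoin, swapProd_append, swapProd_cons, Perm.mul_apply]
  rw [swapProd_apply_of_notMem_Icc hL (by simp only [Set.mem_Icc]; omega),
    swapProd_apply_of_notMem_Icc hR (by simp only [Set.mem_Icc]; omega),
    swap_apply_of_ne_of_ne (by omega) hxk.ne]

lemma swapProd_apply_right {x : ℕ} (hx : x ∈ Set.Icc k b) :
    swapProd (rootJoin a k L C R) x = if swapProd R x = k then a else swapProd R x := by
  obtain ⟨haz, hzk, -, hL, hC, hR⟩ := j
  have hRx := swapProd_apply_mem_Icc hR hx
  rw [Set.mem_Icc] at hx hRx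
  simp only [rootJoin, swapProd_append, swapProd_cons, Perm.mul_apply]
  rw [swapProd_apply_of_notMem_Icc hL (by simp only [Set.mem_Icc]; omega)]
  split_ifs with h
  · rw [h, swap_apply_right,
      swapProd_apply_of_notMem_Icc hC (by simp only [Set.mem_Icc]; omega)]
  · rw [swap_apply_of_ne_of_ne (by omega) h,
      swapProd_apply_of_notMem_Icc hC (by simp only [Set.mem_Icc]; omega)]

lemma restrict_left : restrict a z (rootJoin a k L C R) = L := by
  obtain ⟨-, hzk, -, hL, hC, hR⟩ := j
  rw [restrict_rootJoin (by grind), restrict_eq_self hL, restrict_eq_nil (by grind),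
    restrict_eq_nil (by grind), List.nil_append, List.nil_append]

lemma restrict_centre : restrict (z + 1) k (rootJoin a k L C R) = C := by
  obtain ⟨haz, -, -, hL, hC, hR⟩ := j
  rw [restrict_rootJoin (by grind), restrict_eq_self hC, restrict_eq_nil (by grind),
    restrict_eq_nil (by grind), List.append_nil, List.append_nil]

lemma restrict_right : restrict k b (rootJoin a k L C R) = R := by
  obtain ⟨haz, hzk, -, hL, hC, hR⟩ := j
  rw [restrict_rootJoin (by grind), restrict_eq_self hR, restrict_eq_nil (by grind),
    restrict_eq_nil (by grind), List.append_nil, List.nil_append]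

lemma le_root_of_mem {k' : ℕ} (hk' : (a, k') ∈ rootJoin a k L C R) : k' ≤ k := by
  obtain ⟨haz, hzk, -, hL, hC, hR⟩ := j
  obtain h | h | h | h := mem_rootJoin.1 hk' <;> grind

-- Every pair of the join stays on one side of the cut at `z`, while `L'` would move `z` across it.
lemma le_cut_of_subset {z' : ℕ} {L' : List (ℕ × ℕ)} (hL' : IsIntervalFact a z' L') (hz' : z' < k)
    (hsub : L' ⊆ rootJoin a k L C R) : z' ≤ z := by
  obtain ⟨haz, -, -, hL, hC, hR⟩ := j
  by_contra! hz
  have hcut : ∀ p ∈ L', p.1 ∈ Set.Iic z ↔ p.2 ∈ Set.Iic z := fun p hp => by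
    have := hL'.pairIn p hp
    obtain h | h | h | h := mem_rootJoin.1 (hsub hp) <;> grind
  have := swapProd_apply_mem_iff hcut z
  simp [hL'.apply z haz hz] at this

lemma perm_of_perm {L' C' R' : List (ℕ × ℕ)} (j' : IsRootJoin a z k b L' C' R')
    (h : (rootJoin a k L C R).Perm (rootJoin a k L' C' R')) :
    L.Perm L' ∧ C.Perm C' ∧ R.Perm R' := by
  have hrestrict : ∀ u v,
      (restrict u v (rootJoin a k L C R)).Perm (restrict u v (rootJoin a k L' C' R')) :=
    fun u v => h.filter _
  exact ⟨j.restrict_left ▸ j'.restrict_left ▸ hrestrict a z,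
    j.restrict_centre ▸ j'.restrict_centre ▸ hrestrict (z + 1) k,
    j.restrict_right ▸ j'.restrict_right ▸ hrestrict k b⟩

lemma isIntervalFact_rootJoin (hL : IsIntervalFact a z L) (hC : IsIntervalFact (z + 1) k C)
    (hR : IsIntervalFact k b R) : IsIntervalFact a b (rootJoin a k L C R) where
  pairIn p hp := by
    obtain hp | rfl | hp | hp := mem_rootJoin.1 hp
    · grind [j.pairIn_centre p hp, j.le_left, j.le_right]
    · grind [j.le_left, j.left_lt, j.le_right]
    · grind [j.pairIn_right p hp, j.le_left, j.left_lt]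
    · grind [j.pairIn_left p hp, j.left_lt, j.le_right]
  add_length := by
    have := hL.add_length
    have := hC.add_length
    have := hR.add_length
    simp only [rootJoin, List.length_append, List.length_cons]
    omega
  apply x hax hxb := by
    obtain hxz | rfl | hzx := lt_trichotomy x z
    · rw [j.swapProd_apply_left ⟨hax, hxz.le⟩, hL.apply x hax hxz, if_neg (by omega)]
    · rw [j.swapProd_apply_left ⟨hax, le_rfl⟩, if_pos hL.apply_right, hC.apply_right]
    · obtain hxk | hkx := lt_or_ge x k
      · rw [j.swapProd_apply_centre ⟨hzx, hxk⟩, hC.apply x hzx hxk]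
      · rw [j.swapProd_apply_right ⟨hkx, hxb.le⟩, hR.apply x hkx hxb, if_neg (by omega)]

variable (h : IsIntervalFact a b (rootJoin a k L C R))
include h

lemma swapProd_left_apply_eq_succ {x : ℕ} (hax : a ≤ x) (hxz : x < z) : swapProd L x = x + 1 := by
  have hC := swapProd_apply_mem_Icc j.pairIn_centre (x := k) ⟨j.left_lt, le_rfl⟩
  have hx := h.apply x hax (hxz.trans (j.left_lt.trans_le j.le_right))
  rw [j.swapProd_apply_left ⟨hax, hxz.le⟩] at hx
  split_ifs at hx
  · rw [hx, Set.mem_Icc] at hC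
    omega
  · exact hx

lemma swapProd_centre_apply_eq_succ {x : ℕ} (hzx : z < x) (hxk : x < k) :
    swapProd C x = x + 1 := by
  rw [← j.swapProd_apply_centre ⟨hzx, hxk⟩]
  exact h.apply x (j.le_left.trans hzx.le) (hxk.trans_le j.le_right)

lemma swapProd_right_apply_eq_succ {x : ℕ} (hkx : k ≤ x) (hxb : x < b) :
    swapProd R x = x + 1 := by
  have hax : a < x := j.le_left.trans_lt (j.left_lt.trans_le hkx)
  have hx := h.apply x hax.le hxb
  rw [j.swapProd_apply_right ⟨hkx, hxb.le⟩] at hx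
  split_ifs at hx
  · omega
  · exact hx

-- Each piece has at least as many factors as its interval requires, and there are none to spare.
lemma isIntervalFact_pieces :
    IsIntervalFact a z L ∧ IsIntervalFact (z + 1) k C ∧ IsIntervalFact k b R := by
  have hL := fun x => j.swapProd_left_apply_eq_succ h (x := x)
  have hC := fun x => j.swapProd_centre_apply_eq_succ h (x := x)
  have hR := fun x => j.swapProd_right_apply_eq_succ h (x := x)
  have hlen := h.add_length
  simp only [rootJoin, List.length_append, List.length_cons] at hlen
  have hL_len := sub_le_length_of_apply_eq_succ hL
  have hC_len := sub_le_length_of_apply_eq_succ hC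
  have hR_len := sub_le_length_of_apply_eq_succ hR
  obtain ⟨haz, hzk, hkb, hL_in, hC_in, hR_in⟩ := j
  exact ⟨⟨hL_in, by omega, hL⟩, ⟨hC_in, by omega, hC⟩, ⟨hR_in, by omega, hR⟩⟩

end IsRootJoin

/-- The order in which the factors of a root split can be sorted by commutations: first those on
`[z + 1, k]`, then the root factor, then those on `[k, b]` and finally those on `[a, z]`. -/
def splitRank (z k b : ℕ) (p : ℕ × ℕ) : ℕ :=
  if PairIn (z + 1) k p then 0 else if PairIn k b p then 2 else if p.2 ≤ z then 3 else 1

namespace IsRootSplit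

variable (s : IsRootSplit a z k b l₁ l₂)
include s

lemma pairwise_endpointsDisjoint : (l₁ ++ (a, k) :: l₂).Pairwise fun p q =>
    splitRank z k b q < splitRank z k b p → EndpointsDisjoint p q := by
  obtain ⟨haz, hzk, hkb, h₁, h₂⟩ := s
  rw [List.pairwise_append, List.pairwise_cons]
  refine ⟨List.pairwise_of_forall_mem_list fun p hp q hq => ?_,
    ⟨fun q hq => ?_, List.pairwise_of_forall_mem_list fun p hp q hq => ?_⟩, fun p hp q hq => ?_⟩
  · have := h₁ p hp
    have := h₁ q hq
    grind [splitRank]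
  · have := h₂ q hq
    grind [splitRank]
  · have := h₂ p hp
    have := h₂ q hq
    grind [splitRank]
  · have := h₁ p hp
    obtain rfl | hq := List.mem_cons.1 hq
    · grind [splitRank]
    · have := h₂ q hq
      grind [splitRank]

lemma eq_or_pairIn_of_mem {p : ℕ × ℕ} (hp : p ∈ l₁ ++ (a, k) :: l₂) :
    p = (a, k) ∨ PairIn (z + 1) k p ∨ PairIn k b p ∨ PairIn a z p := by
  obtain ⟨-, -, -, h₁, h₂⟩ := s
  obtain hp | rfl | hp : p ∈ l₁ ∨ p = (a, k) ∨ p ∈ l₂ := by simpa using hp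
  · have := h₁ p hp
    omega
  · exact .inl rfl
  · have := h₂ p hp
    omega

lemma filter_splitRank_eq_one :
    (l₁ ++ (a, k) :: l₂).filter (splitRank z k b · = 1) = [(a, k)] := by
  obtain ⟨haz, hzk, hkb, h₁, h₂⟩ := s
  have hnil₁ : l₁.filter (splitRank z k b · = 1) = [] := List.filter_eq_nil_iff.2 fun p hp => by
    have := h₁ p hp
    grind [splitRank]
  have hnil₂ : l₂.filter (splitRank z k b · = 1) = [] := List.filter_eq_nil_iff.2 fun p hp => by
    have := h₂ p hp
    grind [splitRank]
  have hroot : splitRank z k b (a, k) = 1 := by grind [splitRank]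
  rw [List.filter_append, List.filter_cons_of_pos (by simpa using hroot), hnil₁, hnil₂,
    List.nil_append]

lemma isRootJoin (l : List (ℕ × ℕ)) :
    IsRootJoin a z k b (restrict a z l) (restrict (z + 1) k l) (restrict k b l) :=
  ⟨s.le_left, s.left_lt, s.le_right, fun _ => pairIn_of_mem_restrict,
    fun _ => pairIn_of_mem_restrict, fun _ => pairIn_of_mem_restrict⟩

variable (hl : l = l₁ ++ (a, k) :: l₂)
include hl

lemma prod_map_rootJoin {M : Type*} [Monoid M] {f : ℕ × ℕ → M}
    (hf : ∀ p q, EndpointsDisjoint p q → Commute (f p) (f q)) :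
    ((rootJoin a k (restrict a z l) (restrict (z + 1) k l) (restrict k b l)).map f).prod =
      (l.map f).prod := by
  have hmem : ∀ p ∈ l, p = (a, k) ∨ PairIn (z + 1) k p ∨ PairIn k b p ∨ PairIn a z p :=
    fun p hp => s.eq_or_pairIn_of_mem (hl ▸ hp)
  have h₀ : l.filter (splitRank z k b · = 0) = restrict (z + 1) k l :=
    List.filter_congr fun p _ => by grind [splitRank]
  have h₁ : l.filter (splitRank z k b · = 1) = [(a, k)] := hl ▸ s.filter_splitRank_eq_one
  have h₂ : l.filter (splitRank z k b · = 2) = restrict k b l :=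
    List.filter_congr fun p _ => by grind [splitRank]
  have h₃ : l.filter (splitRank z k b · = 3) = restrict a z l :=
    List.filter_congr fun p hp => by grind [splitRank, s.le_left, s.left_lt]
  have hsort : l.Pairwise fun p q =>
      splitRank z k b q < splitRank z k b p → EndpointsDisjoint p q :=
    hl ▸ s.pairwise_endpointsDisjoint
  rw [prod_map_eq_prod_map_range (l := l) (splitRank z k b) (N := 4)
    (hsort.imp fun h hr => hf _ _ (h hr)) (by grind [splitRank])]
  simp [rootJoin, List.range_succ, h₀, h₁, h₂, h₃]

lemma swapProd_rootJoin :
    swapProd (rootJoin a k (restrict a z l) (restrict (z + 1) k l) (restrict k b l)) =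
      swapProd l :=
  s.prod_map_rootJoin hl fun _ _ => EndpointsDisjoint.commute_swap

lemma length_rootJoin :
    (rootJoin a k (restrict a z l) (restrict (z + 1) k l) (restrict k b l)).length =
      l.length := by
  simpa [← ofAdd_nsmul] using
    s.prod_map_rootJoin hl (f := fun _ => Multiplicative.ofAdd (1 : ℕ)) fun _ _ _ => .all _ _

lemma isIntervalFact_rootJoin (h : IsIntervalFact a b l) :
    IsIntervalFact a b
      (rootJoin a k (restrict a z l) (restrict (z + 1) k l) (restrict k b l)) where
  pairIn p hp := by
    obtain hp | rfl | hp | hp := mem_rootJoin.1 hp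
    · exact h.pairIn p (List.mem_of_mem_filter hp)
    · exact h.pairIn (a, k) (by simp [hl])
    · exact h.pairIn p (List.mem_of_mem_filter hp)
    · exact h.pairIn p (List.mem_of_mem_filter hp)
  add_length := by rw [s.length_rootJoin hl, h.add_length]
  apply := by rw [s.swapProd_rootJoin hl]; exact h.apply

end IsRootSplit

end Pieces

section Trees

/-- The shape of a rooted plane tree whose internal vertices all have three children. -/
inductive TernaryTree
  | leaf
  | node (left centre right : TernaryTree)

namespace TernaryTree

/-- The number of internal vertices. -/
def size : TernaryTree → ℕ
  | leaf => 0
  | node L C R => L.size + C.size + R.size + 1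

/-- The factorization of the cycle on `[a, a + t.size]` encoded by the tree `t`. -/
def pairs : TernaryTree → ℕ → List (ℕ × ℕ)
  | leaf, _ => []
  | node L C R, a =>
    let z := a + L.size
    let k := z + 1 + C.size
    rootJoin a k (L.pairs a) (C.pairs (z + 1)) (R.pairs k)

variable {a b : ℕ}

lemma isIntervalFact_pairs (t : TernaryTree) (a : ℕ) :
    IsIntervalFact a (a + t.size) (t.pairs a) := by
  induction t generalizing a with
  | leaf => exact ⟨by simp [pairs], by simp [pairs, size], by simp only [size]; omega⟩
  | node L C R ihL ihC ihR =>
    have hsize : a + L.size + 1 + C.size + R.size = a + (node L C R).size := by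
      rw [size]
      omega
    exact hsize ▸ IsRootJoin.isIntervalFact_rootJoin
      ⟨by omega, by omega, by omega, (ihL _).pairIn, (ihC _).pairIn, (ihR _).pairIn⟩
      (ihL _) (ihC _) (ihR _)

lemma exists_prod_map_pairs_eq {M : Type*} [Monoid M] {f : ℕ × ℕ → M}
    (hf : ∀ p q, EndpointsDisjoint p q → Commute (f p) (f q)) {l : List (ℕ × ℕ)}
    (h : IsIntervalFact a b l) :
    ∃ t : TernaryTree, a + t.size = b ∧ ((t.pairs a).map f).prod = (l.map f).prod := by
  induction hm : b - a using Nat.strong_induction_on generalizing a b l with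
  | _ m ih =>
    obtain rfl | hab := h.le.eq_or_lt
    · have := h.add_length
      exact ⟨leaf, rfl, by rw [List.eq_nil_of_length_eq_zero (l := l) (by omega)]; rfl⟩
    · obtain ⟨k, l₁, l₂, rfl, hl₁⟩ := h.exists_eq_append_cons hab
      have s := h.isRootSplit hl₁
      have j := s.isRootJoin (l₁ ++ (a, k) :: l₂)
      obtain ⟨hL, hC, hR⟩ := j.isIntervalFact_pieces (s.isIntervalFact_rootJoin rfl h)
      obtain ⟨haz, hzk, hkb, -, -, -⟩ := j
      obtain ⟨L, hLz, hL⟩ := ih _ (by omega) hL rfl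
      obtain ⟨C, hCk, hC⟩ := ih _ (by omega) hC rfl
      obtain ⟨R, hRb, hR⟩ := ih _ (by omega) hR rfl
      refine ⟨node L C R, by rw [size]; omega, ?_⟩
      rw [← s.prod_map_rootJoin rfl hf]
      simp [pairs, rootJoin, hLz, hCk, hL, hC, hR]

lemma isRootJoin_pairs (L C R : TernaryTree) (a : ℕ) :
    IsRootJoin a (a + L.size) (a + L.size + 1 + C.size) (a + L.size + 1 + C.size + R.size)
      (L.pairs a) (C.pairs (a + L.size + 1)) (R.pairs (a + L.size + 1 + C.size)) :=
  ⟨by omega, by omega, by omega, (L.isIntervalFact_pairs _).pairIn,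
    (C.isIntervalFact_pairs _).pairIn, (R.isIntervalFact_pairs _).pairIn⟩

lemma length_pairs (t : TernaryTree) (a : ℕ) : (t.pairs a).length = t.size :=
  Nat.add_left_cancel (t.isIntervalFact_pairs a).add_length

lemma eq_of_perm_pairs {t t' : TernaryTree} (h : (t.pairs a).Perm (t'.pairs a)) : t = t' := by
  induction t generalizing t' a with
  | leaf =>
    cases t' with
    | leaf => rfl
    | node => simpa [length_pairs, size] using h.length_eq
  | node L C R ihL ihC ihR =>
    cases t' with
    | leaf => simpa [length_pairs, size] using h.length_eq
    | node L' C' R' =>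
      have j := isRootJoin_pairs L C R a
      have j' := isRootJoin_pairs L' C' R' a
      have hk : a + L.size + 1 + C.size = a + L'.size + 1 + C'.size :=
        le_antisymm (j'.le_root_of_mem (h.subset (mem_rootJoin.2 (.inr (.inl rfl)))))
          (j.le_root_of_mem (h.symm.subset (mem_rootJoin.2 (.inr (.inl rfl)))))
      have hsize := h.length_eq
      simp only [length_pairs, size] at hsize
      simp only [pairs, ← hk] at h j'
      have hz : a + L.size = a + L'.size :=
        le_antisymm
          (j'.le_cut_of_subset (L.isIntervalFact_pairs a) (by omega)
            fun p hp => h.subset (mem_rootJoin.2 (.inr (.inr (.inr hp)))))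
          (j.le_cut_of_subset (L'.isIntervalFact_pairs a) (by omega)
            fun p hp => h.symm.subset (mem_rootJoin.2 (.inr (.inr (.inr hp)))))
      rw [← hz] at h j'
      rw [show R'.size = R.size by omega] at j'
      obtain ⟨hL, hC, hR⟩ := j.perm_of_perm j' h
      rw [ihL hL, ihC hC, ihR hR]

end TernaryTree

end Trees

section PlaneTrees

namespace TernaryTree

/-- The plane tree of shape `t`. -/
def toPTree : TernaryTree → PTree
  | leaf => .node 0 ![]
  | node L C R => .node 3 ![L.toPTree, C.toPTree, R.toPTree]

lemma internalCount_toPTree (t : TernaryTree) : t.toPTree.internalCount = t.size := by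
  induction t with
  | leaf => simp [toPTree, size, PTree.internalCount]
  | node L C R ihL ihC ihR =>
    simp [toPTree, size, PTree.internalCount, Fin.sum_univ_three, ihL, ihC, ihR, add_comm 1]

lemma numLeaves_toPTree (t : TernaryTree) : t.toPTree.numLeaves = 2 * t.size + 1 := by
  induction t with
  | leaf => simp [toPTree, size, PTree.numLeaves]
  | node L C R ihL ihC ihR =>
    simp [toPTree, size, PTree.numLeaves, Fin.sum_univ_three, ihL, ihC, ihR]
    omega

lemma ternary_toPTree (t : TernaryTree) : t.toPTree.ternary := by
  induction t with
  | leaf => simp [toPTree, PTree.ternary]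
  | node L C R ihL ihC ihR => simp [toPTree, PTree.ternary, Fin.forall_fin_succ, ihL, ihC, ihR]

lemma toPTree_injective : Function.Injective toPTree := by
  intro t
  induction t with
  | leaf => intro t' h; cases t' <;> simp_all [toPTree]
  | node L C R ihL ihC ihR =>
    intro t' h
    cases t' with
    | leaf => simp [toPTree] at h
    | node L' C' R' =>
      simp only [toPTree, PTree.node.injEq, heq_eq_eq, true_and, Matrix.vecCons_inj,
        and_true] at h
      rw [ihL h.1, ihC h.2.1, ihR h.2.2]

lemma exists_toPTree_eq {t : PTree} (ht : t.ternary) : ∃ u : TernaryTree, u.toPTree = t := by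
  induction t with
  | node k f ih =>
    obtain ⟨rfl | rfl, hf⟩ := ht
    · exact ⟨leaf, congrArg (PTree.node 0) (Subsingleton.elim _ _)⟩
    · choose u hu using fun i => ih i (hf i)
      refine ⟨node (u 0) (u 1) (u 2), congrArg (PTree.node 3) (funext fun i => ?_)⟩
      fin_cases i <;> exact hu _

lemma card_size_eq_card_pTree (m : ℕ) :
    Nat.card {t : TernaryTree // t.size = m} =
      Nat.card {t : PTree // t.ternary ∧ t.internalCount = m ∧ t.numLeaves = 2 * m + 1} := by
  refine Nat.card_congr <| .ofBijective
    (fun t => ⟨t.1.toPTree, t.1.ternary_toPTree, by rw [internalCount_toPTree, t.2],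
      by rw [numLeaves_toPTree, t.2]⟩) ⟨fun t t' h => ?_, ?_⟩
  · exact Subtype.ext (toPTree_injective (congrArg Subtype.val h))
  · rintro ⟨t, ht, hsize, -⟩
    obtain ⟨u, rfl⟩ := exists_toPTree_eq ht
    exact ⟨⟨u, u.internalCount_toPTree ▸ hsize⟩, rfl⟩

end TernaryTree

end PlaneTrees

section FinSwap

variable {n m : ℕ} {p q : ℕ × ℕ} {l : List (ℕ × ℕ)}

/-- The transposition of `Fin n` encoded by a pair of natural numbers; the identity if they are not
both less than `n`. -/
def finSwap (n : ℕ) (p : ℕ × ℕ) : Perm (Fin n) :=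
  if h : p.1 < n ∧ p.2 < n then swap ⟨p.1, h.1⟩ ⟨p.2, h.2⟩ else 1

lemma finSwap_apply (h₁ : p.1 < n) (h₂ : p.2 < n) (x : Fin n) :
    (finSwap n p x : ℕ) = swap p.1 p.2 x := by
  simp only [finSwap, h₁, h₂, and_self, dif_pos, swap_apply_def, Fin.ext_iff]
  split_ifs <;> rfl

lemma prod_map_finSwap_apply (hl : ∀ p ∈ l, PairIn 0 m p) (x : Fin (m + 1)) :
    ((l.map (finSwap (m + 1))).prod x : ℕ) = swapProd l x := by
  induction l with
  | nil => rfl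
  | cons p l ih =>
    rw [List.forall_mem_cons] at hl
    rw [List.map_cons, List.prod_cons, Perm.mul_apply, finSwap_apply (by omega) (by omega),
      ih hl.2, swapProd_cons, Perm.mul_apply]

lemma isIntervalFact_iff_prod_map_finSwap (hl : ∀ p ∈ l, PairIn 0 m p) (hlen : l.length = m) :
    IsIntervalFact 0 m l ↔ (l.map (finSwap (m + 1))).prod = finRotate (m + 1) := by
  refine ⟨fun h => ?_, fun h => ⟨hl, by omega, fun x _ hx => ?_⟩⟩
  · ext x
    rw [prod_map_finSwap_apply hl, coe_finRotate]
    split_ifs with hx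
    · rw [hx, Fin.val_last, h.apply_right]
    · exact h.apply x (Nat.zero_le _) (Fin.val_lt_last hx)
  · have := prod_map_finSwap_apply hl ⟨x, by omega⟩
    rwa [h, finRotate_of_lt hx, eq_comm] at this

lemma finSwap_isSwap (hp : PairIn 0 m p) : (finSwap (m + 1) p).IsSwap := by
  rw [finSwap, dif_pos (by omega)]
  exact ⟨_, _, by simpa using hp.2.1.ne, rfl⟩

lemma exists_finSwap_eq {σ : Perm (Fin (m + 1))} (hσ : σ.IsSwap) :
    ∃ p, PairIn 0 m p ∧ finSwap (m + 1) p = σ := by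
  obtain ⟨x, y, hxy, rfl⟩ := hσ
  obtain h | h := lt_or_gt_of_ne hxy
  · exact ⟨(x, y), ⟨Nat.zero_le _, h, y.is_le⟩, dif_pos ⟨x.isLt, y.isLt⟩⟩
  · exact ⟨(y, x), ⟨Nat.zero_le _, h, x.is_le⟩, (dif_pos ⟨y.isLt, x.isLt⟩).trans (swap_comm y x)⟩

lemma exists_map_finSwap_eq {L : List (Perm (Fin (m + 1)))} (hL : ∀ σ ∈ L, σ.IsSwap) :
    ∃ l : List (ℕ × ℕ), (∀ p ∈ l, PairIn 0 m p) ∧ l.map (finSwap (m + 1)) = L := by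
  choose! g hg using fun σ : Perm (Fin (m + 1)) => exists_finSwap_eq (σ := σ)
  refine ⟨L.map g, by simpa using fun σ hσ => (hg σ (hL σ hσ)).1, ?_⟩
  rw [List.map_map]
  exact (List.map_congr_left fun σ hσ => (hg σ (hL σ hσ)).2).trans (List.map_id L)

lemma injOn_finSwap (m : ℕ) : Set.InjOn (finSwap (m + 1)) {p | PairIn 0 m p} := by
  intro p hp q hq h
  obtain ⟨-, hp, hpm⟩ := hp
  obtain ⟨-, hq, hqm⟩ := hq
  have hswap : ∀ x < m + 1, swap p.1 p.2 x = swap q.1 q.2 x := fun x hx => by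
    rw [← finSwap_apply (by omega) (by omega) ⟨x, hx⟩, h, finSwap_apply (by omega) (by omega)]
  have hp₁ := hswap p.1 (by omega)
  have hq₁ := hswap q.1 (by omega)
  simp only [swap_apply_def] at hp₁ hq₁
  grind

lemma EndpointsDisjoint.commute_finSwap (h : EndpointsDisjoint p q) (n : ℕ) :
    Commute (finSwap n p) (finSwap n q) := by
  by_cases hp : p.1 < n ∧ p.2 < n
  · by_cases hq : q.1 < n ∧ q.2 < n
    · refine Perm.ext fun x => Fin.ext ?_
      simp only [Perm.mul_apply, finSwap_apply hp.1 hp.2, finSwap_apply hq.1 hq.2]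
      exact congrArg (· (x : ℕ)) h.commute_swap.eq
    · simp [finSwap, hq]
  · simp [finSwap, hp]

end FinSwap

lemma perm_of_perm_map_of_injOn {α β : Type*} {f : α → β} {s : Set α} (hf : Set.InjOn f s)
    {l l' : List α} (hl : ∀ x ∈ l, x ∈ s) (hl' : ∀ x ∈ l', x ∈ s)
    (h : (l.map f).Perm (l'.map f)) : l.Perm l' := by
  lift l to List s using hl
  lift l' to List s using hl'
  rw [List.map_map, List.map_map] at h
  exact ((List.map_perm_map_iff (Set.injOn_iff_injective.1 hf)).1 h).map _

section Classes

variable {n m : ℕ}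

/-- The equivalence classes of factorizations of the `n`-cycle. -/
abbrev FactClass (n : ℕ) : Type := Quot fun L L' : TransFact n => FactEquiv L.1 L'.1

namespace FactEquiv

variable {L L' K : List (Perm (Fin n))}

lemma perm (h : FactEquiv L L') : L.Perm L' := by
  induction h with
  | refl => exact .refl _
  | swap L₁ L₂ σ τ => exact (List.Perm.swap _ _ _).append_left _
  | trans _ _ ih ih' => exact ih.trans ih'

lemma symm (h : FactEquiv L L') : FactEquiv L' L := by
  induction h with
  | refl L => exact .refl L
  | swap L₁ L₂ σ τ h => exact .swap L₁ L₂ τ σ h.symm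
  | trans _ _ ih ih' => exact ih'.trans ih

lemma append_left (h : FactEquiv L L') : FactEquiv (K ++ L) (K ++ L') := by
  induction h with
  | refl => exact .refl _
  | swap L₁ L₂ σ τ h =>
    rw [← List.append_assoc, ← List.append_assoc]
    exact .swap _ L₂ σ τ h
  | trans _ _ ih ih' => exact ih.trans ih'

lemma append_right (h : FactEquiv L L') : FactEquiv (L ++ K) (L' ++ K) := by
  induction h with
  | refl => exact .refl _
  | swap L₁ L₂ σ τ h =>
    rw [List.append_assoc, List.append_assoc]
    exact .swap L₁ _ σ τ h
  | trans _ _ ih ih' => exact ih.trans ih'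

/-- The equivalence of factorizations as a congruence on words, so that its classes form the monoid
in which the sorting of factors takes place. -/
def con (n : ℕ) : Con (FreeMonoid (Perm (Fin n))) where
  r L L' := FactEquiv L.toList L'.toList
  iseqv := ⟨fun L => .refl L.toList, symm, trans⟩
  mul' h h' := h.append_right.trans h'.append_left

/-- The class of the word with the single letter `σ`. -/
def letter (σ : Perm (Fin n)) : (con n).Quotient := (FreeMonoid.of σ : FreeMonoid (Perm (Fin n)))

lemma commute_letter {σ τ : Perm (Fin n)} (h : Commute σ τ) : Commute (letter σ) (letter τ) :=
  (con n).eq.2 (.swap [] [] σ τ h)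

lemma prod_map_letter_eq_iff : (L.map letter).prod = (L'.map letter).prod ↔ FactEquiv L L' := by
  have hprod : ∀ L : List (Perm (Fin n)),
      (L.map letter).prod = (FreeMonoid.ofList L : (con n).Quotient) := fun L => by
    induction L with
    | nil => rfl
    | cons σ L ih => rw [List.map_cons, List.prod_cons, ih]; rfl
  rw [hprod, hprod]
  exact (con n).eq

end FactEquiv

lemma IsIntervalFact.exists_tree_factEquiv {a b : ℕ} {l : List (ℕ × ℕ)}
    (h : IsIntervalFact a b l) (n : ℕ) : ∃ t : TernaryTree, a + t.size = b ∧
      FactEquiv ((t.pairs a).map (finSwap n)) (l.map (finSwap n)) := by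
  obtain ⟨t, ht, hprod⟩ := TernaryTree.exists_prod_map_pairs_eq
    (f := fun p => FactEquiv.letter (finSwap n p))
    (fun p q hpq => FactEquiv.commute_letter (hpq.commute_finSwap n)) h
  refine ⟨t, ht, FactEquiv.prod_map_letter_eq_iff.1 ?_⟩
  rwa [List.map_map, List.map_map]

namespace TernaryTree

lemma isIntervalFact_pairs_zero {t : TernaryTree} (ht : t.size = m) :
    IsIntervalFact 0 m (t.pairs 0) := by
  simpa [ht] using t.isIntervalFact_pairs 0

/-- The factorization of the cycle `(0 1 … m)` encoded by a tree with `m` internal vertices. -/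
def transFact (t : {t : TernaryTree // t.size = m}) : TransFact (m + 1) :=
  have h := isIntervalFact_pairs_zero t.2
  ⟨(t.1.pairs 0).map (finSwap (m + 1)), by rw [List.length_map, length_pairs, t.2]; rfl,
    List.forall_mem_map.2 fun p hp => finSwap_isSwap (h.pairIn p hp),
    (isIntervalFact_iff_prod_map_finSwap h.pairIn ((length_pairs _ _).trans t.2)).1 h⟩

lemma factClass_mk_transFact_injective :
    Function.Injective fun t : {t : TernaryTree // t.size = m} =>
      (Quot.mk _ (transFact t) : FactClass (m + 1)) := by
  intro t t' h
  let factors : FactClass (m + 1) → Multiset (Perm (Fin (m + 1))) :=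
    Quot.lift (fun L => L.1) fun _ _ h => Multiset.coe_eq_coe.2 h.perm
  have hperm := Multiset.coe_eq_coe.1 (congrArg factors h)
  exact Subtype.ext <| eq_of_perm_pairs <| perm_of_perm_map_of_injOn (injOn_finSwap m)
    (isIntervalFact_pairs_zero t.2).pairIn (isIntervalFact_pairs_zero t'.2).pairIn hperm

lemma factClass_mk_transFact_surjective :
    Function.Surjective fun t : {t : TernaryTree // t.size = m} =>
      (Quot.mk _ (transFact t) : FactClass (m + 1)) := by
  rintro ⟨L, hlen, hswap, hprod⟩
  obtain ⟨l, hl, rfl⟩ := exists_map_finSwap_eq hswap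
  have h := (isIntervalFact_iff_prod_map_finSwap hl (by simpa using hlen)).2 hprod
  obtain ⟨t, ht, hequiv⟩ := h.exists_tree_factEquiv (m + 1)
  exact ⟨⟨t, by omega⟩, Quot.sound hequiv⟩

lemma card_size_eq_card_factClass (m : ℕ) :
    Nat.card {t : TernaryTree // t.size = m} = Nat.card (FactClass (m + 1)) :=
  Nat.card_congr <|
    .ofBijective _ ⟨factClass_mk_transFact_injective, factClass_mk_transFact_surjective⟩

end TernaryTree

end Classes

end CycleFactorizations

/-- the number of equivalence classes of factorizations of the
`n`-cycle `(1 2 … n)` into `n − 1` transpositions equals the number of rooted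
plane trees with `n − 1` internal vertices of degree 4 and `2n` leaves, the
root being a leaf.  (The tree is encoded by the subtree below the root leaf,
which therefore has `2n − 1` leaves.) -/
theorem classes_eq_ternary_trees (n : ℕ) (hn : 2 ≤ n) :
    Nat.card (Quot (fun l₁ l₂ : TransFact n => FactEquiv l₁.1 l₂.1)) =
      Nat.card {t : PTree //
        t.ternary ∧ t.internalCount = n - 1 ∧ t.numLeaves = 2 * n - 1} := by
  obtain ⟨m, rfl⟩ : ∃ m, n = m + 1 := ⟨n - 1, by omega⟩
  rw [← TernaryTree.card_size_eq_card_factClass, TernaryTree.card_size_eq_card_pTree,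
    Nat.add_sub_cancel, show 2 * (m + 1) - 1 = 2 * m + 1 by omega]
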